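/- Let C ⊆ ℝⁿ be the convex polyhedron determined by vectors x*_1,…,x*_s ∈ ℝⁿ and scalars c_1,…,c_s, let g : ℝⁿ×ℝ^d → ℝⁿ be locally Lipschitz continuous, and let F(x,u) := N(x;C) + g(x,u). Then for every x ∈ C, u ∈ ℝ^d, ω ∈ g(x,u) + N(x;C), and w ∈ ℝⁿ one has the coderivative sum-rule estimate D*F((x,u),ω)(w) ⊆ {(a, 0) + b : a ∈ D*N_C(x, ω − g(x,u))(w), b ∈ ∂⟨w,g⟩(x,u)}, where (a,0) ∈ ℝⁿ×ℝ^d and ∂⟨w,g⟩(x,u) ⊆ ℝⁿ×ℝ^d is the limiting subdifferential at (x,u) of the function (x,u) ↦ ⟨w, g(x,u)⟩. -/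

import Mathlib

open Filter Topology Set MeasureTheory
open scoped RealInnerProductSpace

noncomputable section

/-- The limiting (Mordukhovich) normal cone to a set `Ω` at `z`. -/
def limNormal {E : Type*} [NormedAddCommGroup E] [NormedSpace ℝ E]
    (Ω : Set E) (z : E) : Set E :=
  {v | ∃ (zk vk : ℕ → E) (tk : ℕ → ℝ) (yk : ℕ → E),
      Tendsto zk atTop (𝓝 z) ∧ Tendsto vk atTop (𝓝 v) ∧
      (∀ k, 0 ≤ tk k) ∧ (∀ k, yk k ∈ Ω) ∧
      (∀ k, ‖zk k - yk k‖ = Metric.infDist (zk k) Ω) ∧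
      (∀ k, vk k = tk k • (zk k - yk k))}

/-- The convex normal cone to a convex set `C` at `x` (empty if `x ∉ C`). -/
def convNormal {E : Type*} [NormedAddCommGroup E] [InnerProductSpace ℝ E]
    (C : Set E) (x : E) : Set E :=
  {v | x ∈ C ∧ ∀ y ∈ C, ⟪v, y - x⟫ ≤ 0}

/-- Pairing of two components into the `L²` product. -/
def pmk {E F : Type*} [NormedAddCommGroup E] [NormedAddCommGroup F]
    (a : E) (b : F) : WithLp 2 (E × F) :=
  (WithLp.equiv 2 (E × F)).symm (a, b)

/-- First component of an `L²` product element. -/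
def pfst {E F : Type*} [NormedAddCommGroup E] [NormedAddCommGroup F]
    (q : WithLp 2 (E × F)) : E := ((WithLp.equiv 2 (E × F)) q).1

/-- Second component of an `L²` product element. -/
def psnd {E F : Type*} [NormedAddCommGroup E] [NormedAddCommGroup F]
    (q : WithLp 2 (E × F)) : F := ((WithLp.equiv 2 (E × F)) q).2

/-- The coderivative of a set-valued map `G` at `(z, y) ∈ gph G`, applied to `w`. -/
def coderiv {E F : Type*} [NormedAddCommGroup E] [NormedSpace ℝ E]
    [NormedAddCommGroup F] [NormedSpace ℝ F]
    (G : E → Set F) (z : E) (y : F) (w : F) : Set E :=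
  {v | pmk v (-w) ∈ limNormal {q : WithLp 2 (E × F) | psnd q ∈ G (pfst q)} (pmk z y)}

/-- The limiting subdifferential of `h : E → ℝ` at `z`, via limiting normals to the epigraph. -/
def limSubdiff {E : Type*} [NormedAddCommGroup E] [NormedSpace ℝ E]
    (h : E → ℝ) (z : E) : Set E :=
  {v | pmk v (-1 : ℝ) ∈ limNormal {q : WithLp 2 (E × ℝ) | h (pfst q) ≤ psnd q} (pmk z (h z))}
/-- `Euc n` is the Euclidean space `ℝⁿ`. -/
abbrev Euc (n : ℕ) := EuclideanSpace ℝ (Fin n)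

/-!
In finite dimensions the limiting normals to a closed set `Ω` at `z` are the vectors which, for
every `ε > 0`, are Fréchet `ε`-normals to `Ω` at points arbitrarily close to `z`. In this form the
normals are easy to transport. The shear `(p, y) ↦ (p, y + g p)` carries the graph of `G` onto that
of `G + g` and is locally Lipschitz, so a normal `(v, -w)` to `gph (G + g)` becomes a limiting
subgradient of `(p, y) ↦ ⟪w, g p⟫` restricted to `gph G`. The sum rule for a locally Lipschitz
function on a closed set splits it into a subgradient `(b, 0)` with `b ∈ ∂⟪w, g⟫ p` and a normal
`(v - b, -w)` to `gph G`. Finally, a normal to the graph of `(x, u) ↦ N x` has no component along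
`u`.
-/

open scoped Pointwise

section ApproximateSubgradients

variable {E : Type*} [NormedAddCommGroup E] [InnerProductSpace ℝ E]
  {Ω : Set E} {h : E → ℝ} {ε ε' : ℝ} {v v' x z : E}

/-- The Fréchet `ε`-subdifferential at `x` of the restriction of `h` to `Ω`. For `h = 0` these are
the Fréchet `ε`-normals to `Ω` at `x`. Membership of `x` in `Ω` is not part of the definition. -/
def epsSubdiffWithin (h : E → ℝ) (Ω : Set E) (ε : ℝ) (x : E) : Set E :=
  {v | ∀ᶠ y in 𝓝[Ω] x, ⟪v, y - x⟫ ≤ h y - h x + ε * ‖y - x‖}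

/-- The limiting subdifferential at `z` of the restriction of a continuous function `h` to `Ω`,
described by Fréchet `ε`-subgradients at points of `Ω` near `z`. The vector `v` is kept fixed along
the approximation because replacing it by a nearby one only enlarges `ε`. -/
def limSubdiffWithin (h : E → ℝ) (Ω : Set E) (z : E) : Set E :=
  {v | ∀ ε > 0, ∃ᶠ x in 𝓝[Ω] z, v ∈ epsSubdiffWithin h Ω ε x}

theorem mem_epsSubdiffWithin_of_norm_sub_le (hv : v ∈ epsSubdiffWithin h Ω ε x)
    (hε : ε + ‖v' - v‖ ≤ ε') : v' ∈ epsSubdiffWithin h Ω ε' x := by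
  change ∀ᶠ y in 𝓝[Ω] x, _
  filter_upwards [hv] with y hy
  have hsplit : ⟪v', y - x⟫ = ⟪v, y - x⟫ + ⟪v' - v, y - x⟫ := by rw [inner_sub_left]; ring
  have hcs := real_inner_le_norm (v' - v) (y - x)
  have hmul := mul_le_mul_of_nonneg_right hε (norm_nonneg (y - x))
  linarith

theorem mem_epsSubdiffWithin_of_eventually_le_sq {c : ℝ} (hε : ε < ε')
    (hv : ∀ᶠ y in 𝓝[Ω] x, ⟪v, y - x⟫ ≤ h y - h x + ε * ‖y - x‖ + c * ‖y - x‖ ^ 2) :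
    v ∈ epsSubdiffWithin h Ω ε' x := by
  have hlim : Tendsto (fun y => ε + c * ‖y - x‖) (𝓝[Ω] x) (𝓝 ε) :=
    Continuous.tendsto' (by fun_prop) x _ (by simp) |>.mono_left nhdsWithin_le_nhds
  change ∀ᶠ y in 𝓝[Ω] x, _
  filter_upwards [hv, hlim.eventually_le_const hε] with y hy hyε
  have := mul_le_mul_of_nonneg_right hyε (norm_nonneg (y - x))
  linarith

theorem norm_le_of_eventually_inner_le {c : ℝ} (hc : 0 ≤ c)
    (hv : ∀ᶠ y in 𝓝 x, ⟪v, y - x⟫ ≤ c * ‖y - x‖) : ‖v‖ ≤ c := by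
  rcases eq_or_ne v 0 with rfl | hv0
  · simpa using hc
  have hray : Tendsto (fun s : ℝ => x + s • v) (𝓝[>] 0) (𝓝 x) :=
    Continuous.tendsto' (by fun_prop) 0 _ (by simp) |>.mono_left nhdsWithin_le_nhds
  obtain ⟨s, hs, hs0 : 0 < s⟩ := ((hray.eventually hv).and self_mem_nhdsWithin).exists
  rw [add_sub_cancel_left, real_inner_smul_right, real_inner_self_eq_norm_sq, norm_smul,
    Real.norm_of_nonneg hs0.le] at hs
  have hpos : 0 < s * ‖v‖ := mul_pos hs0 (norm_pos_iff.2 hv0)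
  exact le_of_mul_le_mul_left (by linarith) hpos

theorem norm_le_of_mem_epsSubdiffWithin_univ {K : NNReal} {s : Set E} (hs : s ∈ 𝓝 x)
    (hh : LipschitzOnWith K h s) (hε : 0 ≤ ε) (hv : v ∈ epsSubdiffWithin h univ ε x) :
    ‖v‖ ≤ K + ε := by
  refine norm_le_of_eventually_inner_le (x := x) (by positivity) ?_
  rw [epsSubdiffWithin, nhdsWithin_univ] at hv
  filter_upwards [hv, hs] with y hy hys
  have := (le_abs_self _).trans (hh.norm_sub_le hys (mem_of_mem_nhds hs))
  linarith

theorem mem_limSubdiffWithin_of_mapClusterPt {ι : Type*} {l : Filter ι} {p u : ι → E} {e : ι → ℝ}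
    (hp : Tendsto p l (𝓝[Ω] z)) (he : Tendsto e l (𝓝 0))
    (hu : ∀ i, u i ∈ epsSubdiffWithin h Ω (e i) (p i)) (hv : MapClusterPt v l u) :
    v ∈ limSubdiffWithin h Ω z := by
  intro ε hε
  have hclose : ∃ᶠ i in l, dist (u i) v < ε / 2 :=
    hv.frequently (Metric.ball_mem_nhds v (half_pos hε))
  refine hp.frequently ((hclose.and_eventually (he.eventually_lt_const (half_pos hε))).mono ?_)
  rintro i ⟨hui, hei⟩
  rw [dist_comm, dist_eq_norm] at hui
  exact mem_epsSubdiffWithin_of_norm_sub_le (hu i) (by linarith)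

end ApproximateSubgradients

section LimitingNormals

variable {E : Type*} [NormedAddCommGroup E] [InnerProductSpace ℝ E] {Ω : Set E} {v z : E}

theorem inner_sub_le_of_norm_sub_eq_infDist {x y y' : E}
    (hy : ‖x - y‖ = Metric.infDist x Ω) (hy' : y' ∈ Ω) :
    2 * ⟪x - y, y' - y⟫ ≤ ‖y' - y‖ ^ 2 := by
  have hle : ‖x - y‖ ^ 2 ≤ ‖x - y'‖ ^ 2 := by
    rw [hy, ← dist_eq_norm]
    exact pow_le_pow_left₀ Metric.infDist_nonneg (Metric.infDist_le_dist_of_mem hy') 2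
  rw [← sub_sub_sub_cancel_right x y' y, norm_sub_sq_real (x - y)] at hle
  linarith

theorem limNormal_subset_limSubdiffWithin_zero (hz : z ∈ Ω) :
    limNormal Ω z ⊆ limSubdiffWithin 0 Ω z := by
  rintro v ⟨x, u, t, y, hx, hu, ht, hy, hproj, hu_eq⟩
  have hyz : Tendsto y atTop (𝓝[Ω] z) := by
    refine tendsto_nhdsWithin_iff.2 ⟨?_, .of_forall hy⟩
    have hxy : Tendsto (fun k => x k - y k) atTop (𝓝 0) := by
      refine squeeze_zero_norm (fun k => ?_) (tendsto_iff_dist_tendsto_zero.1 hx)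
      exact (hproj k).trans_le (Metric.infDist_le_dist_of_mem hz)
    simpa using hx.sub hxy
  refine mem_limSubdiffWithin_of_mapClusterPt hyz tendsto_one_div_add_atTop_nhds_zero_nat
    (fun k => ?_) hu.mapClusterPt
  refine mem_epsSubdiffWithin_of_eventually_le_sq (ε := 0) (c := t k) Nat.one_div_pos_of_nat ?_
  filter_upwards [self_mem_nhdsWithin] with y' hy'
  have := mul_le_mul_of_nonneg_left (inner_sub_le_of_norm_sub_eq_infDist (hproj k) hy') (ht k)
  rw [hu_eq, real_inner_smul_left, Pi.zero_apply, Pi.zero_apply]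
  nlinarith [mul_nonneg (ht k) (sq_nonneg ‖y' - y k‖)]

theorem norm_inv_smul_sub_sub_le_of_norm_sub_le {s ε : ℝ} {y q : E} (hs : 0 < s) (hε : 0 ≤ ε)
    (hq : ‖y + s • v - q‖ ≤ ‖s • v‖) (hv : ⟪v, q - y⟫ ≤ ε * ‖q - y‖) :
    ‖s⁻¹ • (y + s • v - q) - v‖ ≤ 2 * ε := by
  have hsq : ‖q - y‖ * ‖q - y‖ ≤ 2 * s * ε * ‖q - y‖ := by
    have hexp : ‖y + s • v - q‖ ^ 2 = ‖s • v‖ ^ 2 - 2 * (s * ⟪v, q - y⟫) + ‖q - y‖ ^ 2 := by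
      rw [show y + s • v - q = s • v - (q - y) by abel, norm_sub_sq_real, real_inner_smul_left]
    have hle := pow_le_pow_left₀ (norm_nonneg _) hq 2
    have := mul_le_mul_of_nonneg_left hv hs.le
    linarith
  have hbound : ‖q - y‖ ≤ 2 * s * ε := by
    rcases (norm_nonneg (q - y)).eq_or_lt with h0 | hpos
    · rw [← h0]; positivity
    · exact le_of_mul_le_mul_right hsq hpos
  have hdiff : s⁻¹ • (y + s • v - q) - v = s⁻¹ • (y - q) := by
    rw [show y + s • v - q = (y - q) + s • v by abel, smul_add, inv_smul_smul₀ hs.ne',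
      add_sub_cancel_right]
  rw [hdiff, norm_smul, Real.norm_of_nonneg (by positivity), norm_sub_rev, inv_mul_le_iff₀ hs]
  linarith

/- Project `y + s • v` onto `Ω` for small `s > 0`. Comparing the projection `q` with `y` gives
`‖q - y‖ ^ 2 ≤ 2 * s * ⟪v, q - y⟫ ≤ 2 * s * ε * ‖q - y‖`, so that `s⁻¹ • (y + s • v - q)` differs
from `v` by at most `2 * ε`. -/
theorem exists_proximal_normal_near [ProperSpace E] (hΩ : IsClosed Ω) {ε η : ℝ} (hε : 0 ≤ ε)
    (hη : 0 < η) {y : E} (hy : y ∈ Ω) (hv : v ∈ epsSubdiffWithin 0 Ω ε y) :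
    ∃ t : ℝ, ∃ x q : E, 0 ≤ t ∧ q ∈ Ω ∧ ‖x - q‖ = Metric.infDist x Ω ∧ ‖x - y‖ < η ∧
      ‖t • (x - q) - v‖ ≤ 2 * ε := by
  obtain ⟨δ, hδ, hball⟩ := Metric.mem_nhdsWithin_iff.1 hv
  have hsmall : Tendsto (fun s : ℝ => ‖s • v‖) (𝓝[>] 0) (𝓝 0) :=
    Continuous.tendsto' (by fun_prop) 0 _ (by simp) |>.mono_left nhdsWithin_le_nhds
  obtain ⟨s, ⟨hsη, hsδ⟩, hs : 0 < s⟩ := ((hsmall.eventually_lt_const hη).and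
    (hsmall.eventually_lt_const (half_pos hδ)) |>.and self_mem_nhdsWithin).exists
  obtain ⟨q, hq, hproj⟩ := hΩ.exists_infDist_eq_dist ⟨y, hy⟩ (y + s • v)
  rw [dist_eq_norm, eq_comm] at hproj
  have hxq : ‖y + s • v - q‖ ≤ ‖s • v‖ := by
    rw [hproj, ← add_sub_cancel_left y (s • v), ← dist_eq_norm, add_sub_cancel_left]
    exact Metric.infDist_le_dist_of_mem hy
  have hqy : ‖q - y‖ < δ := by
    have := norm_sub_le (s • v) (y + s • v - q)
    rw [show s • v - (y + s • v - q) = q - y by abel] at this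
    linarith
  have hinner : ⟪v, q - y⟫ ≤ ε * ‖q - y‖ := by
    simpa using hball ⟨mem_ball_iff_norm.2 hqy, hq⟩
  exact ⟨s⁻¹, y + s • v, q, by positivity, hq, hproj, by rwa [add_sub_cancel_left],
    norm_inv_smul_sub_sub_le_of_norm_sub_le hs hε hxq hinner⟩

theorem limNormal_eq_limSubdiffWithin_zero [ProperSpace E] (hΩ : IsClosed Ω) (hz : z ∈ Ω) :
    limNormal Ω z = limSubdiffWithin 0 Ω z := by
  refine (limNormal_subset_limSubdiffWithin_zero hz).antisymm fun v hv => ?_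
  have happrox (k : ℕ) : ∃ t : ℝ, ∃ x q : E, 0 ≤ t ∧ q ∈ Ω ∧ ‖x - q‖ = Metric.infDist x Ω ∧
      ‖x - z‖ ≤ 2 * (1 / (k + 1)) ∧ ‖t • (x - q) - v‖ ≤ 2 * (1 / (k + 1)) := by
    have hk : (0 : ℝ) < 1 / (k + 1) := Nat.one_div_pos_of_nat
    obtain ⟨y, hvy, hyz, hy⟩ := (hv _ hk).and_eventually
      (inter_mem (mem_nhdsWithin_of_mem_nhds (Metric.ball_mem_nhds z hk)) self_mem_nhdsWithin)
      |>.exists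
    obtain ⟨t, x, q, ht, hq, hproj, hxy, htv⟩ := exists_proximal_normal_near hΩ hk.le hk hy hvy
    refine ⟨t, x, q, ht, hq, hproj, ?_, htv⟩
    have := norm_sub_le_norm_sub_add_norm_sub x y z
    linarith [mem_ball_iff_norm.1 hyz]
  choose t x q ht hq hproj hx hu using happrox
  have hrate : Tendsto (fun k : ℕ => 2 * (1 / ((k : ℝ) + 1))) atTop (𝓝 0) := by
    simpa using (tendsto_one_div_add_atTop_nhds_zero_nat (𝕜 := ℝ)).const_mul 2
  refine ⟨x, fun k => t k • (x k - q k), t, q, ?_, ?_, ht, hq, hproj, fun _ => rfl⟩ <;>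
    rw [tendsto_iff_norm_sub_tendsto_zero]
  · exact squeeze_zero (fun _ => norm_nonneg _) hx hrate
  · exact squeeze_zero (fun _ => norm_nonneg _) hu hrate

end LimitingNormals

section SumRule

theorem exists_isMinOn_add_penalty {X : Type*} [TopologicalSpace X] {S U : Set X}
    (hS : IsCompact S) {f π : X → ℝ} (hf : Continuous f) (hπ : Continuous π) (hπ0 : ∀ x, 0 ≤ π x)
    {x₀ : X} (hx₀ : x₀ ∈ S) (hπx₀ : π x₀ = 0)
    (hmin : ∀ x ∈ S, π x = 0 → x ≠ x₀ → f x₀ < f x) (hU : IsOpen U) (hx₀U : x₀ ∈ U) :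
    ∃ j : ℕ, ∃ x ∈ S ∩ U, IsMinOn (fun y => f y + j * π y) S x := by
  obtain ⟨j, hj⟩ : ∃ j : ℕ, S \ U ⊆ {x | f x₀ < f x + j * π x} := by
    refine (hS.diff hU).elim_directed_cover (fun j : ℕ => {x | f x₀ < f x + j * π x})
      (fun j => isOpen_lt (by fun_prop) (by fun_prop)) (fun x hx => mem_iUnion.2 ?_)
      (directed_of_isDirected_le fun i j hij x hx => ?_)
    · rcases (hπ0 x).eq_or_lt with h0 | hpos
      · exact ⟨0, by simpa using hmin x hx.1 h0.symm (ne_of_mem_of_not_mem hx₀U hx.2).symm⟩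
      · obtain ⟨j, hj⟩ := exists_nat_gt ((f x₀ - f x) / π x)
        exact ⟨j, sub_lt_iff_lt_add'.1 ((div_lt_iff₀ hpos).1 hj)⟩
    · refine (show f x₀ < f x + i * π x from hx).trans_le ?_
      have := hπ0 x
      gcongr
  obtain ⟨x, hxS, hx⟩ := hS.exists_isMinOn ⟨x₀, hx₀⟩
    (f := fun y => f y + j * π y) (by fun_prop)
  refine ⟨j, x, ⟨hxS, by_contra fun hxU => ?_⟩, hx⟩
  have hlt : f x₀ < f x + j * π x := hj ⟨hxS, hxU⟩
  have hle : f x + j * π x ≤ f x₀ + j * π x₀ := hx hx₀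
  rw [hπx₀, mul_zero, add_zero] at hle
  exact hle.not_gt hlt

variable {E : Type*} [NormedAddCommGroup E] [InnerProductSpace ℝ E]
  {Ω : Set E} {h : E → ℝ} {ζ z : E}

theorem norm_sub_sq_expand (x y c : E) :
    ‖y - c‖ ^ 2 = ‖x - c‖ ^ 2 - 2 * ⟪c - x, y - x⟫ + ‖y - x‖ ^ 2 := by
  rw [← norm_sub_rev c y, ← norm_sub_rev c x, ← norm_sub_sq_real, sub_sub_sub_cancel_right]

theorem add_smul_sub_mem_epsSubdiffWithin {v x a : E} {ε ε' c : ℝ} (hε : ε < ε')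
    (hv : ∀ᶠ y in 𝓝[Ω] x,
      ⟪v, y - x⟫ ≤ h y - h x + ε * ‖y - x‖ + c * (‖y - a‖ ^ 2 - ‖x - a‖ ^ 2)) :
    v + (2 * c) • (a - x) ∈ epsSubdiffWithin h Ω ε' x := by
  refine mem_epsSubdiffWithin_of_eventually_le_sq (c := c) hε (hv.mono fun y hy => ?_)
  rw [norm_sub_sq_expand x y a] at hy
  rw [inner_add_left, real_inner_smul_left]
  linarith

theorem exists_isMinOn_decoupled_penalty [ProperSpace E] (hΩ : IsClosed Ω) (hh : Continuous h)
    (hz : z ∈ Ω) {ε c ρ r : ℝ} (hεc : ε < c) (hρ : 0 ≤ ρ) (hr : 0 < r)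
    (hζ : ∀ x ∈ Metric.closedBall z ρ ∩ Ω, ⟪ζ, x - z⟫ ≤ h x - h z + ε * ‖x - z‖) :
    ∃ j : ℕ, ∃ p ∈ Metric.closedBall z ρ ∩ Metric.ball z r,
      ∃ q ∈ Metric.closedBall z ρ ∩ Ω ∩ Metric.ball z r,
        IsMinOn (fun k : E × E => h k.1 - ⟪ζ, k.2 - z⟫ + c * ‖k.2 - z‖ + j * ‖k.1 - k.2‖ ^ 2)
          (Metric.closedBall z ρ ×ˢ (Metric.closedBall z ρ ∩ Ω)) (p, q) := by
  let f : E × E → ℝ := fun k => h k.1 - ⟪ζ, k.2 - z⟫ + c * ‖k.2 - z‖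
  let S : Set (E × E) := Metric.closedBall z ρ ×ˢ (Metric.closedBall z ρ ∩ Ω)
  have hS : IsCompact S :=
    (isCompact_closedBall z ρ).prod ((isCompact_closedBall z ρ).inter_right hΩ)
  have hstrict : ∀ k ∈ S, ‖k.1 - k.2‖ ^ 2 = 0 → k ≠ (z, z) → f (z, z) < f k := by
    rintro ⟨p, q⟩ ⟨-, hq⟩ hpq hne
    obtain rfl : p = q := by simpa [sub_eq_zero] using hpq
    have hpz : p ≠ z := by simpa using hne
    have := mul_lt_mul_of_pos_right hεc (norm_pos_iff.2 (sub_ne_zero.2 hpz))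
    simp only [f, sub_self, inner_zero_right, norm_zero, mul_zero]
    linarith [hζ p hq]
  obtain ⟨j, ⟨p, q⟩, ⟨⟨hp, hq⟩, hpr, hqr⟩, hmin⟩ := exists_isMinOn_add_penalty hS (f := f)
    (π := fun k => ‖k.1 - k.2‖ ^ 2) (by fun_prop) (by fun_prop) (fun _ => by positivity)
    (by simp [S, hρ, hz]) (by simp) hstrict
    (Metric.isOpen_ball.prod Metric.isOpen_ball) ⟨Metric.mem_ball_self hr, Metric.mem_ball_self hr⟩
  exact ⟨j, p, ⟨hp, hpr⟩, q, ⟨hq, hqr⟩, hmin⟩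

/- Decoupling: if `ζ` is an `ε`-subgradient of `h` on `Ω` at `z`, then `(z, z)` is the strict local
minimum, on the diagonal, of `h p - ⟪ζ, q - z⟫ + c * ‖q - z‖` with `ε < c < ε'`. Penalizing
`‖p - q‖ ^ 2` moves the minimum only slightly; at the perturbed minimum, optimality in `p` and in
`q` yields the subgradient `β = 2 * j • (q - p)` and the normal `ζ - β`. -/
theorem exists_epsSubdiffWithin_decoupling [ProperSpace E] (hΩ : IsClosed Ω) (hh : Continuous h)
    (hz : z ∈ Ω) {ε ε' η : ℝ} (hε : 0 < ε) (hε' : ε < ε') (hη : 0 < η)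
    (hζ : ζ ∈ epsSubdiffWithin h Ω ε z) :
    ∃ p ∈ Metric.ball z η, ∃ q ∈ Ω ∩ Metric.ball z η, ∃ β ∈ epsSubdiffWithin h univ ε p,
      ζ - β ∈ epsSubdiffWithin 0 Ω ε' q := by
  obtain ⟨ρ, hρ, hζρ⟩ := (nhdsWithin_hasBasis Metric.nhds_basis_closedBall Ω).mem_iff.1 hζ
  obtain ⟨c, hεc, hcε'⟩ := exists_between hε'
  obtain ⟨j, p, ⟨-, hpr⟩, q, ⟨⟨-, hqΩ⟩, hqr⟩, hmin⟩ := exists_isMinOn_decoupled_penalty hΩ hh hz hεc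
    hρ.le (lt_min hρ hη) fun x hx => hζρ hx
  have hball : Metric.ball z (min ρ η) ⊆ Metric.closedBall z ρ :=
    (Metric.ball_subset_ball (min_le_left ρ η)).trans Metric.ball_subset_closedBall
  have hsmall := Metric.ball_subset_ball (x := z) (min_le_right ρ η)
  refine ⟨p, hsmall hpr, q, ⟨hqΩ, hsmall hqr⟩, 0 + (2 * j : ℝ) • (q - p), ?_, ?_⟩
  · refine add_smul_sub_mem_epsSubdiffWithin (ε := 0) hε ?_
    filter_upwards [mem_nhdsWithin_of_mem_nhds (Metric.isOpen_ball.mem_nhds hpr)] with p' hp'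
    have hle := isMinOn_iff.1 hmin (p', q) ⟨hball hp', hball hqr, hqΩ⟩
    linarith [inner_zero_left (𝕜 := ℝ) (p' - p)]
  · rw [show ζ - (0 + (2 * j : ℝ) • (q - p)) = ζ + (2 * j : ℝ) • (p - q) by module]
    refine add_smul_sub_mem_epsSubdiffWithin hcε' ?_
    filter_upwards [mem_nhdsWithin_of_mem_nhds (Metric.isOpen_ball.mem_nhds hqr),
      self_mem_nhdsWithin] with q' hq' hq'Ω
    have hle := isMinOn_iff.1 hmin (p, q') ⟨hball hpr, hball hq', hq'Ω⟩
    have htri := mul_le_mul_of_nonneg_left (norm_sub_le_norm_sub_add_norm_sub q' q z)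
      (hε.trans hεc).le
    have hsplit : ⟪ζ, q' - q⟫ = ⟪ζ, q' - z⟫ - ⟪ζ, q - z⟫ := by
      rw [← inner_sub_right, sub_sub_sub_cancel_right]
    rw [norm_sub_rev p q, norm_sub_rev p q'] at hle
    rw [hsplit, Pi.zero_apply, Pi.zero_apply]
    linarith

theorem exists_epsSubdiffWithin_of_mem_limSubdiffWithin [ProperSpace E] (hΩ : IsClosed Ω)
    (hh : Continuous h) (hζ : ζ ∈ limSubdiffWithin h Ω z) {ε : ℝ} (hε : 0 < ε) :
    ∃ p ∈ Metric.ball z ε, ∃ q ∈ Ω ∩ Metric.ball z ε, ∃ β ∈ epsSubdiffWithin h univ ε p,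
      ζ - β ∈ epsSubdiffWithin 0 Ω ε q := by
  have hε2 := half_pos hε
  obtain ⟨x, hζx, hxz, hx⟩ := (hζ _ hε2).and_eventually
    (inter_mem (mem_nhdsWithin_of_mem_nhds (Metric.ball_mem_nhds z hε2)) self_mem_nhdsWithin)
    |>.exists
  obtain ⟨p, hp, q, ⟨hqΩ, hq⟩, β, hβ, hν⟩ :=
    exists_epsSubdiffWithin_decoupling hΩ hh hx hε2 (half_lt_self hε) hε2 hζx
  have hball : Metric.ball x (ε / 2) ⊆ Metric.ball z ε := by
    refine Metric.ball_subset_ball' ?_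
    linarith [Metric.mem_ball.1 hxz]
  refine ⟨p, hball hp, q, ⟨hqΩ, hball hq⟩, β, ?_, hν⟩
  exact mem_epsSubdiffWithin_of_norm_sub_le hβ (by simpa using (half_lt_self hε).le)

theorem limSubdiffWithin_subset_add [ProperSpace E] (hΩ : IsClosed Ω) (hh : LocallyLipschitz h) :
    limSubdiffWithin h Ω z ⊆ limSubdiffWithin h univ z + limSubdiffWithin 0 Ω z := by
  intro ζ hζ
  choose p hp q hq β hβ hν using fun k : ℕ =>
    exists_epsSubdiffWithin_of_mem_limSubdiffWithin hΩ hh.continuous hζ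
      (Nat.one_div_pos_of_nat (α := ℝ) (n := k))
  have hrate := tendsto_one_div_add_atTop_nhds_zero_nat (𝕜 := ℝ)
  have hpz : Tendsto p atTop (𝓝 z) := tendsto_iff_dist_tendsto_zero.2 <|
    squeeze_zero (fun _ => dist_nonneg) (fun k => (Metric.mem_ball.1 (hp k)).le) hrate
  have hqz : Tendsto q atTop (𝓝 z) := tendsto_iff_dist_tendsto_zero.2 <|
    squeeze_zero (fun _ => dist_nonneg) (fun k => (Metric.mem_ball.1 (hq k).2).le) hrate
  obtain ⟨K, s, hs, hK⟩ := hh z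
  have hbounded : ∀ᶠ k in atTop, β k ∈ Metric.closedBall (0 : E) (K + 1) := by
    filter_upwards [hpz.eventually (eventually_mem_nhds_iff.2 hs),
      hrate.eventually_le_const one_pos] with k hks hk1
    rw [mem_closedBall_zero_iff]
    linarith [norm_le_of_mem_epsSubdiffWithin_univ hks hK Nat.one_div_pos_of_nat.le (hβ k)]
  obtain ⟨b, -, hb⟩ :=
    (isCompact_closedBall (0 : E) (K + 1)).exists_mapClusterPt_of_frequently hbounded.frequently
  refine ⟨b, ?_, ζ - b, ?_, add_sub_cancel b ζ⟩
  · exact mem_limSubdiffWithin_of_mapClusterPt (by rwa [nhdsWithin_univ]) hrate hβ hb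
  · have hqΩ : Tendsto q atTop (𝓝[Ω] z) :=
      tendsto_nhdsWithin_iff.2 ⟨hqz, .of_forall fun k => (hq k).1⟩
    exact mem_limSubdiffWithin_of_mapClusterPt hqΩ hrate hν
      (hb.continuousAt_comp (f := fun β => ζ - β) (by fun_prop))

end SumRule

section Products

variable {E F : Type*} [NormedAddCommGroup E] [NormedAddCommGroup F]

@[simp]
theorem pfst_pmk (a : E) (b : F) : pfst (pmk a b) = a := rfl

@[simp]
theorem psnd_pmk (a : E) (b : F) : psnd (pmk a b) = b := rfl

@[simp]
theorem pfst_sub (q q' : WithLp 2 (E × F)) : pfst (q - q') = pfst q - pfst q' := rfl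

@[simp]
theorem psnd_sub (q q' : WithLp 2 (E × F)) : psnd (q - q') = psnd q - psnd q' := rfl

@[fun_prop]
theorem continuous_pfst : Continuous (pfst : WithLp 2 (E × F) → E) := WithLp.continuous_fst 2 E F

@[fun_prop]
theorem continuous_psnd : Continuous (psnd : WithLp 2 (E × F) → F) := WithLp.continuous_snd 2 E F

@[fun_prop]
theorem continuous_pmk {X : Type*} [TopologicalSpace X] {f : X → E} {g : X → F}
    (hf : Continuous f) (hg : Continuous g) : Continuous fun x => pmk (f x) (g x) :=
  (WithLp.prod_continuous_toLp 2 E F).comp (hf.prodMk hg)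

theorem norm_sq_eq_pfst_add_psnd (q : WithLp 2 (E × F)) :
    ‖q‖ ^ 2 = ‖pfst q‖ ^ 2 + ‖psnd q‖ ^ 2 :=
  WithLp.prod_norm_sq_eq_of_L2 q

theorem norm_pfst_le (q : WithLp 2 (E × F)) : ‖pfst q‖ ≤ ‖q‖ := WithLp.norm_fst_le E q

theorem norm_pmk_zero_right (a : E) : ‖pmk a (0 : F)‖ = ‖a‖ := WithLp.norm_toLp_fst 2 E F a

theorem norm_pmk_zero_left (b : F) : ‖pmk (0 : E) b‖ = ‖b‖ := WithLp.norm_toLp_snd 2 E F b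

theorem inner_eq_pfst_add_psnd [InnerProductSpace ℝ E] [InnerProductSpace ℝ F]
    (q q' : WithLp 2 (E × F)) : ⟪q, q'⟫ = ⟪pfst q, pfst q'⟫ + ⟪psnd q, psnd q'⟫ :=
  WithLp.prod_inner_apply q q'

theorem locallyLipschitz_comp_pfst {h : E → ℝ} (hh : LocallyLipschitz h) :
    LocallyLipschitz fun q : WithLp 2 (E × F) => h (pfst q) := by
  refine hh.comp (LipschitzWith.locallyLipschitz (K := 1) (.mk_one fun q q' => ?_))
  rw [dist_eq_norm, dist_eq_norm]
  exact norm_pfst_le (q - q')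

end Products

section Cylinders

variable {E F : Type*} [NormedAddCommGroup E] [InnerProductSpace ℝ E]
  [NormedAddCommGroup F] [InnerProductSpace ℝ F] {h : E → ℝ} {ε : ℝ} {β q z : WithLp 2 (E × F)}

theorem pfst_mem_epsSubdiffWithin_of_comp_pfst
    (hβ : β ∈ epsSubdiffWithin (fun q => h (pfst q)) univ ε q) :
    pfst β ∈ epsSubdiffWithin h univ ε (pfst q) := by
  have hslice : Tendsto (fun x => pmk x (psnd q)) (𝓝 (pfst q)) (𝓝 q) :=
    Continuous.tendsto (by fun_prop) (pfst q)
  rw [epsSubdiffWithin, nhdsWithin_univ] at hβ ⊢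
  refine (hslice.eventually hβ).mono fun x hx => ?_
  have hsub : pmk x (psnd q) - q = pmk (x - pfst q) 0 := congrArg (pmk _) (sub_self (psnd q))
  rw [hsub, norm_pmk_zero_right, inner_eq_pfst_add_psnd] at hx
  simpa using hx

theorem norm_psnd_le_of_mem_epsSubdiffWithin_comp_pfst (hε : 0 ≤ ε)
    (hβ : β ∈ epsSubdiffWithin (fun q => h (pfst q)) univ ε q) : ‖psnd β‖ ≤ ε := by
  have hslice : Tendsto (fun y => pmk (pfst q) y) (𝓝 (psnd q)) (𝓝 q) :=
    Continuous.tendsto (by fun_prop) (psnd q)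
  rw [epsSubdiffWithin, nhdsWithin_univ] at hβ
  refine norm_le_of_eventually_inner_le hε ((hslice.eventually hβ).mono fun y hy => ?_)
  have hsub : pmk (pfst q) y - q = pmk 0 (y - psnd q) :=
    congrArg (pmk · (y - psnd q)) (sub_self (pfst q))
  rw [hsub, norm_pmk_zero_left, inner_eq_pfst_add_psnd] at hy
  simpa using hy

theorem limSubdiffWithin_comp_pfst_subset :
    limSubdiffWithin (fun q : WithLp 2 (E × F) => h (pfst q)) univ z ⊆
      (pmk · 0) '' limSubdiffWithin h univ (pfst z) := by
  intro β hβ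
  have hpsnd : psnd β = 0 := by
    refine norm_le_zero_iff.1 (le_of_forall_pos_le_add fun ε hε => ?_)
    obtain ⟨q, hq⟩ := (hβ ε hε).exists
    simpa using norm_psnd_le_of_mem_epsSubdiffWithin_comp_pfst hε.le hq
  refine ⟨pfst β, fun ε hε => ?_, congrArg (pmk (pfst β)) hpsnd.symm⟩
  have hpfst : Tendsto pfst (𝓝[univ] z) (𝓝[univ] (pfst z)) := by
    simpa using continuous_pfst.tendsto z
  exact hpfst.frequently ((hβ ε hε).mono fun q => pfst_mem_epsSubdiffWithin_of_comp_pfst)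

end Cylinders

section Epigraphs

variable {E : Type*} [NormedAddCommGroup E] [InnerProductSpace ℝ E] {h : E → ℝ} {z : E}

theorem limSubdiffWithin_univ_subset_limSubdiff [FiniteDimensional ℝ E] (hh : Continuous h) :
    limSubdiffWithin h univ z ⊆ limSubdiff h z := by
  intro v hv
  let epi : Set (WithLp 2 (E × ℝ)) := {q | h (pfst q) ≤ psnd q}
  have hclosed : IsClosed epi := isClosed_le (by fun_prop) (by fun_prop)
  change pmk v (-1) ∈ limNormal epi (pmk z (h z))
  rw [limNormal_eq_limSubdiffWithin_zero hclosed (le_refl (h z))]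
  intro ε hε
  have hlift : Tendsto (fun x => pmk x (h x)) (𝓝[univ] z) (𝓝[epi] (pmk z (h z))) := by
    rw [nhdsWithin_univ]
    exact tendsto_nhdsWithin_iff.2
      ⟨Continuous.tendsto (by fun_prop) z, .of_forall fun x => le_refl (h x)⟩
  refine hlift.frequently ((hv ε hε).mono fun x hx => ?_)
  have hpfst : Tendsto pfst (𝓝[epi] (pmk x (h x))) (𝓝[univ] x) := by
    rw [nhdsWithin_univ]
    exact (continuous_pfst.tendsto _).mono_left nhdsWithin_le_nhds
  change ∀ᶠ q in 𝓝[epi] (pmk x (h x)), _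
  filter_upwards [hpfst.eventually hx, self_mem_nhdsWithin] with q hq (hq_epi : h (pfst q) ≤ psnd q)
  have hinner : ⟪pmk v (-1), q - pmk x (h x)⟫ = ⟪v, pfst q - x⟫ + (h x - psnd q) := by
    rw [inner_eq_pfst_add_psnd]
    simp
  have hnorm := mul_le_mul_of_nonneg_left (norm_pfst_le (q - pmk x (h x))) hε.le
  rw [pfst_sub, pfst_pmk] at hnorm
  rw [hinner, Pi.zero_apply, Pi.zero_apply]
  linarith

end Epigraphs

section Graphs

variable {E F : Type*} [NormedAddCommGroup E] [NormedAddCommGroup F]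

/-- The graph of a set-valued map, as a subset of the `L²` product. -/
def gph (G : E → Set F) : Set (WithLp 2 (E × F)) := {q | psnd q ∈ G (pfst q)}

/-- The sum `G + g` of a set-valued map `G` and a single-valued map `g`. -/
def perturb (G : E → Set F) (g : E → F) (x : E) : Set F := {ω | ∃ v ∈ G x, ω = v + g x}

/-- The shear `(x, y) ↦ (x, y + g x)`, which maps the graph of `G` onto that of `perturb G g`. -/
def shear (g : E → F) (q : WithLp 2 (E × F)) : WithLp 2 (E × F) :=
  pmk (pfst q) (psnd q + g (pfst q))

variable {G : E → Set F} {g : E → F}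

theorem shear_mem_gph_perturb_iff {q : WithLp 2 (E × F)} :
    shear g q ∈ gph (perturb G g) ↔ q ∈ gph G := by
  constructor
  · rintro ⟨v, hv, hq⟩
    obtain rfl : psnd q = v := add_right_cancel hq
    exact hv
  · exact fun hq => ⟨psnd q, hq, rfl⟩

theorem shear_shear_neg (q : WithLp 2 (E × F)) : shear g (shear (-g) q) = q :=
  congrArg (pmk (pfst q)) (neg_add_cancel_right (psnd q) (g (pfst q)))

theorem continuous_shear (hg : Continuous g) : Continuous (shear g) :=
  continuous_pmk (by fun_prop) (by fun_prop)

theorem shear_sub_shear (q q' : WithLp 2 (E × F)) :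
    shear g q' - shear g q = q' - q + pmk 0 (g (pfst q') - g (pfst q)) := by
  change pmk (pfst q' - pfst q) (psnd q' + g (pfst q') - (psnd q + g (pfst q))) =
    pmk (pfst q' - pfst q + 0) (psnd q' - psnd q + (g (pfst q') - g (pfst q)))
  rw [add_zero, add_sub_add_comm]

theorem norm_shear_sub_shear_le {K : NNReal} {s : Set E} (hg : LipschitzOnWith K g s)
    {q q' : WithLp 2 (E × F)} (hq : pfst q ∈ s) (hq' : pfst q' ∈ s) :
    ‖shear g q' - shear g q‖ ≤ (1 + K) * ‖q' - q‖ := by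
  have hlip := hg.norm_sub_le hq' hq
  have hpfst := mul_le_mul_of_nonneg_left (norm_pfst_le (q' - q)) K.coe_nonneg
  have htri := norm_add_le (q' - q) (pmk 0 (g (pfst q') - g (pfst q)))
  rw [← shear_sub_shear, norm_pmk_zero_left] at htri
  rw [pfst_sub] at hpfst
  linarith

end Graphs

section Coderivatives

variable {E F : Type*} [NormedAddCommGroup E] [InnerProductSpace ℝ E]
  [NormedAddCommGroup F] [InnerProductSpace ℝ F]
  {G : E → Set F} {g : E → F} {v x : E} {w y ω : F}

theorem mem_epsSubdiffWithin_gph_of_shear {K : NNReal} {s : Set E} {δ : ℝ} {q : WithLp 2 (E × F)}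
    (hg : Continuous g) (hK : LipschitzOnWith K g s) (hs : s ∈ 𝓝 (pfst q)) (hδ : 0 ≤ δ)
    (hv : pmk v (-w) ∈ epsSubdiffWithin 0 (gph (perturb G g)) δ (shear g q)) :
    pmk v (-w) ∈ epsSubdiffWithin (fun q => ⟪w, g (pfst q)⟫) (gph G) (δ * (1 + K)) q := by
  have hshear : Tendsto (shear g) (𝓝[gph G] q) (𝓝[gph (perturb G g)] (shear g q)) :=
    (continuous_shear hg).continuousWithinAt.tendsto_nhdsWithin
      fun q' => shear_mem_gph_perturb_iff.2
  have hpfst : ∀ᶠ q' in 𝓝[gph G] q, pfst q' ∈ s :=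
    mem_nhdsWithin_of_mem_nhds (continuous_pfst.continuousAt hs)
  change ∀ᶠ q' in 𝓝[gph G] q, _
  filter_upwards [hshear.eventually hv, hpfst] with q' hq' hq's
  have hinner : ⟪pmk v (-w), shear g q' - shear g q⟫ =
      ⟪pmk v (-w), q' - q⟫ - (⟪w, g (pfst q')⟫ - ⟪w, g (pfst q)⟫) := by
    rw [shear_sub_shear, inner_add_right, inner_eq_pfst_add_psnd _ (pmk 0 _)]
    simp [sub_eq_add_neg, inner_add_right, add_comm]
  have hnorm := mul_le_mul_of_nonneg_left
    (norm_shear_sub_shear_le hK (mem_of_mem_nhds hs) hq's) hδ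
  rw [hinner, Pi.zero_apply, Pi.zero_apply] at hq'
  linarith

theorem mem_limSubdiffWithin_gph_of_perturb (hg : LocallyLipschitz g)
    (hv : pmk v (-w) ∈ limSubdiffWithin 0 (gph (perturb G g)) (pmk x ω)) :
    pmk v (-w) ∈ limSubdiffWithin (fun q => ⟪w, g (pfst q)⟫) (gph G) (pmk x (ω - g x)) := by
  intro ε hε
  obtain ⟨K, s, hs, hK⟩ := hg x
  have hK1 : (0 : ℝ) < 1 + K := by positivity
  have hunshear : Tendsto (shear (-g)) (𝓝[gph (perturb G g)] (pmk x ω))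
      (𝓝[gph G] (pmk x (ω - g x))) := by
    rw [show pmk x (ω - g x) = shear (-g) (pmk x ω) from congrArg (pmk x) (sub_eq_add_neg ω (g x))]
    refine (continuous_shear hg.continuous.neg).continuousWithinAt.tendsto_nhdsWithin fun q hq => ?_
    rwa [← shear_mem_gph_perturb_iff (g := g), shear_shear_neg]
  have hpfst : ∀ᶠ q in 𝓝[gph (perturb G g)] (pmk x ω), s ∈ 𝓝 (pfst q) :=
    ((continuous_pfst.tendsto _).mono_left nhdsWithin_le_nhds).eventually
      (eventually_mem_nhds_iff.2 hs)
  refine hunshear.frequently (((hv _ (div_pos hε hK1)).and_eventually hpfst).mono ?_)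
  rintro q ⟨hq, hqs⟩
  have := mem_epsSubdiffWithin_gph_of_shear (q := shear (-g) q) hg.continuous hK hqs
    (div_pos hε hK1).le (by rwa [shear_shear_neg])
  rwa [div_mul_cancel₀ _ hK1.ne'] at this

theorem mem_coderiv_iff_mem_limSubdiffWithin [FiniteDimensional ℝ E] [FiniteDimensional ℝ F]
    (hG : IsClosed (gph G)) (hy : y ∈ G x) :
    v ∈ coderiv G x y w ↔ pmk v (-w) ∈ limSubdiffWithin 0 (gph G) (pmk x y) := by
  have hxy : pmk x y ∈ gph G := hy
  rw [← limNormal_eq_limSubdiffWithin_zero hG hxy]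
  rfl

theorem coderiv_perturb_subset [FiniteDimensional ℝ E] [FiniteDimensional ℝ F]
    (hG : IsClosed (gph G)) (hg : LocallyLipschitz g) (hω : ω - g x ∈ G x) :
    coderiv (perturb G g) x ω w ⊆
      coderiv G x (ω - g x) w + limSubdiff (fun p => ⟪w, g p⟫) x := by
  intro v hv
  have hwg : LocallyLipschitz fun p => ⟪w, g p⟫ := (innerSL ℝ w).lipschitz.locallyLipschitz.comp hg
  have hω' : pmk x ω ∈ gph (perturb G g) := ⟨ω - g x, hω, (sub_add_cancel ω (g x)).symm⟩
  have hv' := limNormal_subset_limSubdiffWithin_zero (Ω := gph (perturb G g)) hω' hv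
  obtain ⟨β, hβ, ν, hν, hsum⟩ := limSubdiffWithin_subset_add hG (locallyLipschitz_comp_pfst hwg)
    (mem_limSubdiffWithin_gph_of_perturb hg hv')
  obtain ⟨b, hb, rfl⟩ := limSubdiffWithin_comp_pfst_subset (h := fun p => ⟪w, g p⟫) hβ
  have hν_eq : ν = pmk v (-w) - pmk b 0 := eq_sub_of_add_eq' hsum
  have hsub : pmk v (-w) - pmk b 0 = pmk (v - b) (-w) :=
    congrArg (pmk (v - b)) (sub_zero (-w))
  rw [hν_eq, hsub, ← mem_coderiv_iff_mem_limSubdiffWithin hG hω] at hν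
  have hb' := limSubdiffWithin_univ_subset_limSubdiff hwg.continuous hb
  exact ⟨v - b, hν, b, hb', sub_add_cancel v b⟩

end Coderivatives

section ParameterIndependent

variable {E U F : Type*} [NormedAddCommGroup E] [InnerProductSpace ℝ E]
  [NormedAddCommGroup U] [InnerProductSpace ℝ U] [NormedAddCommGroup F] [InnerProductSpace ℝ F]
  {N : E → Set F} {p v : WithLp 2 (E × U)} {y w : F}

theorem norm_psnd_le_of_mem_epsSubdiffWithin_gph_comp_pfst {ε : ℝ} (hε : 0 ≤ ε)
    (hy : y ∈ N (pfst p))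
    (hv : pmk v (-w) ∈ epsSubdiffWithin 0 (gph fun p => N (pfst p)) ε (pmk p y)) :
    ‖psnd v‖ ≤ ε := by
  have hslice : Tendsto (fun u => pmk (pmk (pfst p) u) y) (𝓝 (psnd p))
      (𝓝[gph fun p => N (pfst p)] (pmk p y)) :=
    tendsto_nhdsWithin_iff.2 ⟨Continuous.tendsto (by fun_prop) (psnd p), .of_forall fun _ => hy⟩
  refine norm_le_of_eventually_inner_le hε ((hslice.eventually hv).mono fun u hu => ?_)
  have hsub : pmk (pmk (pfst p) u) y - pmk p y = pmk (pmk 0 (u - psnd p)) 0 := by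
    change pmk (pmk (pfst p - pfst p) (u - psnd p)) (y - y) = _
    rw [sub_self, sub_self]
  rw [hsub, norm_pmk_zero_right, norm_pmk_zero_left, inner_eq_pfst_add_psnd,
    inner_eq_pfst_add_psnd] at hu
  simpa using hu

theorem mem_epsSubdiffWithin_gph_of_comp_pfst {ε : ℝ}
    (hv : pmk v (-w) ∈ epsSubdiffWithin 0 (gph fun p => N (pfst p)) ε (pmk p y)) :
    pmk (pfst v) (-w) ∈ epsSubdiffWithin 0 (gph N) ε (pmk (pfst p) y) := by
  have hslice : Tendsto (fun r => pmk (pmk (pfst r) (psnd p)) (psnd r)) (𝓝[gph N] (pmk (pfst p) y))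
      (𝓝[gph fun p => N (pfst p)] (pmk p y)) :=
    ContinuousWithinAt.tendsto_nhdsWithin (Continuous.continuousWithinAt (by fun_prop))
      fun _ hr => hr
  refine (hslice.eventually hv).mono fun r hr => ?_
  have hsub : pmk (pmk (pfst r) (psnd p)) (psnd r) - pmk p y =
      pmk (pmk (pfst r - pfst p) 0) (psnd r - y) :=
    congrArg (fun u => pmk (pmk (pfst r - pfst p) u) (psnd r - y)) (sub_self (psnd p))
  have hnorm : ‖pmk (pmk (pfst r - pfst p) (0 : U)) (psnd r - y)‖ = ‖r - pmk (pfst p) y‖ := by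
    rw [← sq_eq_sq₀ (norm_nonneg _) (norm_nonneg _), norm_sq_eq_pfst_add_psnd,
      norm_sq_eq_pfst_add_psnd (r - _)]
    exact congrArg (fun t => t ^ 2 + _) (norm_pmk_zero_right _)
  rw [hsub, hnorm, inner_eq_pfst_add_psnd, inner_eq_pfst_add_psnd] at hr
  rw [inner_eq_pfst_add_psnd]
  simpa using hr

theorem coderiv_comp_pfst_subset [FiniteDimensional ℝ E] [FiniteDimensional ℝ F]
    (hN : IsClosed (gph N)) (hy : y ∈ N (pfst p)) :
    coderiv (fun p : WithLp 2 (E × U) => N (pfst p)) p y w ⊆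
      (pmk · 0) '' coderiv N (pfst p) y w := by
  intro v hv
  have hv' := limNormal_subset_limSubdiffWithin_zero (Ω := gph fun p => N (pfst p)) hy hv
  have hpsnd : psnd v = 0 := by
    refine norm_le_zero_iff.1 (le_of_forall_pos_le_add fun ε hε => ?_)
    obtain ⟨q, hq, hqN⟩ := ((hv' ε hε).and_eventually self_mem_nhdsWithin).exists
    simpa using norm_psnd_le_of_mem_epsSubdiffWithin_gph_comp_pfst hε.le hqN hq
  refine ⟨pfst v, ?_, congrArg (pmk (pfst v)) hpsnd.symm⟩
  rw [mem_coderiv_iff_mem_limSubdiffWithin hN hy]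
  intro ε hε
  have hproj : Tendsto (fun q => pmk (pfst (pfst q)) (psnd q))
      (𝓝[gph fun p => N (pfst p)] (pmk p y)) (𝓝[gph N] (pmk (pfst p) y)) :=
    ContinuousWithinAt.tendsto_nhdsWithin (Continuous.continuousWithinAt (by fun_prop))
      fun _ hq => hq
  exact hproj.frequently ((hv' ε hε).mono fun q => mem_epsSubdiffWithin_gph_of_comp_pfst)

end ParameterIndependent

theorem isClosed_gph_convNormal {E : Type*} [NormedAddCommGroup E] [InnerProductSpace ℝ E]
    {C : Set E} (hC : IsClosed C) : IsClosed (gph (convNormal C)) := by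
  have hgph : gph (convNormal C) =
      pfst ⁻¹' C ∩ ⋂ y ∈ C, {q : WithLp 2 (E × E) | ⟪psnd q, y - pfst q⟫ ≤ 0} := by
    ext q
    simp [gph, convNormal]
  rw [hgph]
  exact (hC.preimage continuous_pfst).inter
    (isClosed_biInter fun y _ => isClosed_le (by fun_prop) (by fun_prop))

theorem isClosed_polyhedron {E ι : Type*} [NormedAddCommGroup E] [InnerProductSpace ℝ E]
    (a : ι → E) (c : ι → ℝ) : IsClosed {x | ∀ j, ⟪a j, x⟫ ≤ c j} := by
  simp only [ofPred_forall]
  exact isClosed_iInter fun j => isClosed_le (by fun_prop) (by fun_prop)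

theorem statement4_general {E U F : Type*} [NormedAddCommGroup E] [InnerProductSpace ℝ E]
    [FiniteDimensional ℝ E] [NormedAddCommGroup U] [InnerProductSpace ℝ U] [FiniteDimensional ℝ U]
    [NormedAddCommGroup F] [InnerProductSpace ℝ F] [FiniteDimensional ℝ F]
    {N : E → Set F} (hN : IsClosed (gph N)) {g : WithLp 2 (E × U) → F} (hg : LocallyLipschitz g)
    {p : WithLp 2 (E × U)} {ω : F} (hω : ω - g p ∈ N (pfst p)) (w : F) :
    coderiv (perturb (fun p => N (pfst p)) g) p ω w ⊆
      (pmk · 0) '' coderiv N (pfst p) (ω - g p) w + limSubdiff (fun p => ⟪w, g p⟫) p := by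
  have hN' : IsClosed (gph fun p : WithLp 2 (E × U) => N (pfst p)) :=
    hN.preimage (f := fun q => pmk (pfst (pfst q)) (psnd q)) (by fun_prop)
  exact (coderiv_perturb_subset hN' hg hω).trans
    (add_subset_add_right (coderiv_comp_pfst_subset hN hω))

/-- coderivative sum-rule estimate for `F(x,u) = N(x;C) + g(x,u)` with a
locally Lipschitz perturbation `g`. -/
theorem statement4 (n d s : ℕ)
    (xs : Fin s → Euc n) (c : Fin s → ℝ)
    (g : WithLp 2 (Euc n × Euc d) → Euc n)
    (hg : LocallyLipschitz g)
    (C : Set (Euc n)) (hC : C = {x | ∀ j, ⟪xs j, x⟫ ≤ c j})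
    (F : WithLp 2 (Euc n × Euc d) → Set (Euc n))
    (hF : ∀ p, F p = {ω | ∃ v ∈ convNormal C (pfst p), ω = v + g p}) :
    ∀ (x : Euc n), x ∈ C → ∀ (u : Euc d) (ω : Euc n),
      (∃ v ∈ convNormal C x, ω = g (pmk x u) + v) →
      ∀ (w : Euc n) (z : WithLp 2 (Euc n × Euc d)),
        z ∈ coderiv F (pmk x u) ω w →
        ∃ a ∈ coderiv (fun y => convNormal C y) x (ω - g (pmk x u)) w,
          ∃ b ∈ limSubdiff (fun p => ⟪w, g p⟫) (pmk x u),
            z = pmk a (0 : Euc d) + b := by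
  intro x _ u ω hω w z hz
  obtain rfl : F = perturb (fun p => convNormal C (pfst p)) g := funext hF
  have hC_closed : IsClosed C := hC ▸ isClosed_polyhedron xs c
  have hω' : ω - g (pmk x u) ∈ convNormal C x := by
    obtain ⟨v, hv, rfl⟩ := hω
    rwa [add_sub_cancel_left]
  obtain ⟨_, ⟨a, ha, rfl⟩, b, hb, rfl⟩ :=
    statement4_general (isClosed_gph_convNormal hC_closed) hg hω' w hz
  exact ⟨a, ha, b, hb, rfl⟩
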